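/- arXiv:2510.18628 — 4 statements merged into one kernel-verified Lean document; each statement's English description precedes it below -/
import Mathlib

section
/- Order-independence of rectification by non-conflicting rules: let F be a Boolean function over X, Th a Boolean function over X (the domain theory), and R₁ = (b₁ ⇒ h₁), R₂ = (b₂ ⇒ h₂) two classification rules. Define single-rule rectification by F ★ (b ⇒ y) = F ∨ b and F ★ (b ⇒ ȳ) = F ∧ ¬b (pointwise). If R₁ and R₂ do not conflict given Th — that is, if h₁ ≠ h₂ then no assignment satisfies b₁, b₂ and Th simultaneously — then for every assignment v satisfying Th, ((F ★ R₁) ★ R₂)(v) = ((F ★ R₂) ★ R₁)(v). -/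
/-- An assignment satisfies a literal `(x, p)` iff it gives `x` the value `p`. -/
def satLit {V : Type*} (v : V → Bool) (ℓ : V × Bool) : Prop := v ℓ.1 = ℓ.2

/-- An assignment satisfies a term iff it satisfies every literal of it. -/
def satTerm {V : Type*} (v : V → Bool) (t : Finset (V × Bool)) : Prop :=
  ∀ ℓ ∈ t, satLit v ℓ

instance {V : Type*} (v : V → Bool) (t : Finset (V × Bool)) : Decidable (satTerm v t) :=
  inferInstanceAs (Decidable (∀ ℓ ∈ t, v ℓ.1 = ℓ.2))

/-- The indicator Boolean function of a term. -/
def indTerm {V : Type*} (t : Finset (V × Bool)) (v : V → Bool) : Bool :=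
  decide (satTerm v t)

/-- A classification rule: a body (a term) and a head (`true` for `y`, `false` for `ȳ`). -/
structure ClassRule (V : Type*) where
  body : Finset (V × Bool)
  head : Bool

/-- Single-rule rectification: `F ★ (b ⇒ y) = F ∨ b` and `F ★ (b ⇒ ȳ) = F ∧ ¬b`,
pointwise. -/
def rectify {V : Type*} (F : (V → Bool) → Bool) (R : ClassRule V) : (V → Bool) → Bool :=
  fun v => if R.head then F v || indTerm R.body v else F v && !(indTerm R.body v)

/-!
Rectifying by `b ⇒ h` overwrites the value of `F` by `h` where `b` holds and leaves `F` alone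
elsewhere. Two such overwrites commute at `v` unless both apply there with different values, and
for non-conflicting rules this cannot happen at an assignment satisfying the theory.
-/

section

variable {V : Type*}

theorem rectify_apply (F : (V → Bool) → Bool) (R : ClassRule V) (v : V → Bool) :
    rectify F R v = if satTerm v R.body then R.head else F v := by
  by_cases hbody : satTerm v R.body <;> cases hhead : R.head <;>
    simp [rectify, indTerm, hbody, hhead]

theorem rectify_rectify_comm_apply (F : (V → Bool) → Bool) {R₁ R₂ : ClassRule V} {v : V → Bool}
    (hcompat : satTerm v R₁.body → satTerm v R₂.body → R₁.head = R₂.head) :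
    rectify (rectify F R₁) R₂ v = rectify (rectify F R₂) R₁ v := by
  simp only [rectify_apply]
  split_ifs with h₂ h₁
  · exact (hcompat h₁ h₂).symm
  all_goals rfl

end

/-- Order-independence of rectification by non-conflicting rules: if the rules `R₁` and
`R₂` do not conflict given the domain theory `Th` (whenever their heads differ, no
assignment satisfies both bodies together with `Th`), then on every assignment
satisfying `Th`, rectifying by `R₁` then `R₂` agrees with rectifying by `R₂` then `R₁`. -/
theorem rectify_order_independent {V : Type*}
    (F Th : (V → Bool) → Bool) (R1 R2 : ClassRule V)
    (hnc : R1.head ≠ R2.head →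
      ¬ ∃ v : V → Bool, satTerm v R1.body ∧ satTerm v R2.body ∧ Th v = true) :
    ∀ v : V → Bool, Th v = true →
      rectify (rectify F R1) R2 v = rectify (rectify F R2) R1 v := by
  intro v hTh
  refine rectify_rectify_comm_apply F fun h₁ h₂ => ?_
  by_contra hne
  exact hnc hne ⟨v, h₁, h₂, hTh⟩
end

section
/- Rectifying a random forest by a classification rule amounts to rectifying each of its trees: let F = [T₁, …, T_m] be a random forest over X (majority vote of the Boolean functions Tᵢ) and b a term over X. Then for every assignment v: (i) the majority vote of [T₁ ∨ b, …, T_m ∨ b] at v equals (F ∨ b)(v), where F ∨ b is the rectification of F by b ⇒ y; and (ii) the majority vote of [T₁ ∧ ¬b, …, T_m ∧ ¬b] at v equals (F ∧ ¬b)(v), where F ∧ ¬b is the rectification of F by b ⇒ ȳ. -/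
/-- The majority vote of a random forest (a list of trees, each viewed as a Boolean
function) at an assignment `v`: true iff strictly more than half of the trees output
true at `v`. -/
def majority {V : Type*} (F : List ((V → Bool) → Bool)) (v : V → Bool) : Bool :=
  decide (F.length < 2 * F.countP (fun T => T v))

/-! Fix the assignment `v`. Each rectification acts on every vote `T v` by one and the same monotone
map `Bool → Bool`, which is either the identity or constant. The identity leaves the majority alone,
and a constant map makes the nonempty forest unanimous. Negation, the only remaining self-map of
`Bool`, does not commute with the vote because a tie counts as `false`. -/

theorem eq_id_or_eq_const_of_monotone_bool {f : Bool → Bool} (hf : Monotone f) :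
    f = id ∨ ∃ c, f = Function.const Bool c := by
  have of_false_le_true : ∀ g : Bool → Bool, g false ≤ g true →
      g = id ∨ ∃ c, g = Function.const Bool c := by
    decide
  exact of_false_le_true f (hf (Bool.false_le true))

section Majority

variable {V : Type*} {F : List ((V → Bool) → Bool)} {v : V → Bool}

theorem majority_eq_of_unanimous (hF : F ≠ []) {c : Bool} (h : ∀ T ∈ F, T v = c) :
    majority F v = c := by
  cases c with
  | false =>
    have no_votes : F.countP (fun T => T v) = 0 :=
      List.countP_eq_zero.mpr fun T hT => by simp [h T hT]
    simp [majority, no_votes]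
  | true =>
    have all_votes : F.countP (fun T => T v) = F.length := List.countP_eq_length.mpr h
    have length_pos : 0 < F.length := List.length_pos_iff.mpr hF
    simp only [majority, all_votes, decide_eq_true_eq]
    omega

theorem majority_map_eq_of_forall_eq {g : ((V → Bool) → Bool) → (V → Bool) → Bool}
    (h : ∀ T ∈ F, g T v = T v) : majority (F.map g) v = majority F v := by
  have same_votes : (F.map g).countP (fun T => T v) = F.countP (fun T => T v) := by
    rw [List.countP_map]
    exact List.countP_congr fun T hT => by simp [h T hT]
  simp only [majority, List.length_map, same_votes]

theorem majority_map_of_monotone (hF : F ≠ []) {g : ((V → Bool) → Bool) → (V → Bool) → Bool}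
    {f : Bool → Bool} (hf : Monotone f) (h : ∀ T ∈ F, g T v = f (T v)) :
    majority (F.map g) v = f (majority F v) := by
  obtain rfl | ⟨c, rfl⟩ := eq_id_or_eq_const_of_monotone_bool hf
  · exact majority_map_eq_of_forall_eq h
  · exact majority_eq_of_unanimous (by simpa using hF) (List.forall_mem_map.mpr h)

end Majority

theorem forest_rectification_treewise_general {V : Type*}
    (F : List ((V → Bool) → Bool)) (hF : F ≠ []) (b : (V → Bool) → Bool) (v : V → Bool) :
    majority (F.map fun T w => T w || b w) v = (majority F v || b v) ∧
      majority (F.map fun T w => T w && !b w) v = (majority F v && !b v) := by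
  have monotone_or : Monotone (· || b v) := fun _ _ hxy => sup_le_sup_right hxy (b v)
  have monotone_and_not : Monotone (· && !b v) := fun _ _ hxy => inf_le_inf_right (!b v) hxy
  exact ⟨majority_map_of_monotone hF monotone_or fun _ _ => rfl,
    majority_map_of_monotone hF monotone_and_not fun _ _ => rfl⟩

/-- Rectifying a random forest by a classification rule amounts to rectifying each of
its trees: (i) the majority vote of `[T₁ ∨ b, …, T_m ∨ b]` equals `F ∨ b`, the
rectification of `F` by `b ⇒ y`; (ii) the majority vote of `[T₁ ∧ ¬b, …, T_m ∧ ¬b]`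
equals `F ∧ ¬b`, the rectification of `F` by `b ⇒ ȳ`. -/
theorem forest_rectification_treewise {V : Type*}
    (F : List ((V → Bool) → Bool)) (hF : F ≠ [])
    (b : Finset (V × Bool)) (v : V → Bool) :
    (majority (F.map (fun T => fun w => T w || indTerm b w)) v
        = (majority F v || indTerm b v)) ∧
    (majority (F.map (fun T => fun w => T w && !(indTerm b w))) v
        = (majority F v && !(indTerm b v))) :=
  forest_rectification_treewise_general F hF (indTerm b) v
end

section
/- A UP-majoritary reason is an abductive explanation: let Φ₁, …, Φ_m be CNF formulas over X, Th a CNF theory over X, and F the Boolean function whose value at v is true iff strictly more than m/2 of the Φᵢ are satisfied by v. Let x be an assignment with F(x) = true and let t be a term satisfied by x such that t is a UP-implicant given Th of at least ⌊m/2⌋ + 1 of the Φᵢ. Then every assignment satisfying t and Th satisfies F; in particular t is an abductive explanation for x given (F, Th). -/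
instance {V : Type*} (v : V → Bool) (ℓ : V × Bool) : Decidable (satLit v ℓ) :=
  inferInstanceAs (Decidable (v ℓ.1 = ℓ.2))

/-- An assignment satisfies a clause iff it satisfies some literal of it. -/
def satClause {V : Type*} (v : V → Bool) (δ : Finset (V × Bool)) : Prop :=
  ∃ ℓ ∈ δ, satLit v ℓ

instance {V : Type*} (v : V → Bool) (δ : Finset (V × Bool)) : Decidable (satClause v δ) :=
  inferInstanceAs (Decidable (∃ ℓ ∈ δ, satLit v ℓ))

/-- An assignment satisfies a CNF iff it satisfies every clause of it. -/
def satCNF {V : Type*} (v : V → Bool) (Φ : Finset (Finset (V × Bool))) : Prop :=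
  ∀ δ ∈ Φ, satClause v δ

instance {V : Type*} (v : V → Bool) (Φ : Finset (Finset (V × Bool))) :
    Decidable (satCNF v Φ) :=
  inferInstanceAs (Decidable (∀ δ ∈ Φ, satClause v δ))

/-- The complementary literal. -/
def litCompl {V : Type*} (ℓ : V × Bool) : V × Bool := (ℓ.1, !ℓ.2)

/-- Derivability of a literal by unit propagation from a CNF theory `Th`. -/
inductive UPDeriv {V : Type*} (Th : Finset (Finset (V × Bool))) : V × Bool → Prop
  | step (δ : Finset (V × Bool)) (ℓ : V × Bool) (hδ : δ ∈ Th)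
      (h : ∀ ℓ' ∈ δ, ℓ' ≠ ℓ → UPDeriv Th (litCompl ℓ')) : UPDeriv Th ℓ

/-- A term `t` is a UP-implicant of a CNF `Φ` given a CNF theory `Th`. -/
def UPImplicant {V : Type*} [DecidableEq V] (Th Φ : Finset (Finset (V × Bool)))
    (t : Finset (V × Bool)) : Prop :=
  ∀ δ ∈ Φ, ∃ ℓ ∈ δ, UPDeriv (Th ∪ t.image (fun l => ({l} : Finset (V × Bool)))) ℓ

/-- The majority-vote classifier on a list of CNF formulas: true at `v` iff strictly
more than half of the formulas are satisfied by `v`. -/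
def majSat {V : Type*} (Φs : List (Finset (Finset (V × Bool)))) (v : V → Bool) : Bool :=
  decide (Φs.length < 2 * Φs.countP (fun Φ => decide (satCNF v Φ)))

theorem satLit_litCompl_iff {V : Type*} {v : V → Bool} {ℓ : V × Bool} :
    satLit v (litCompl ℓ) ↔ ¬ satLit v ℓ :=
  Bool.eq_not

theorem satCNF_union_iff {V : Type*} [DecidableEq V] {v : V → Bool}
    {Φ Ψ : Finset (Finset (V × Bool))} :
    satCNF v (Φ ∪ Ψ) ↔ satCNF v Φ ∧ satCNF v Ψ :=
  Finset.forall_mem_union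

theorem satCNF_image_singleton_iff {V : Type*} [DecidableEq V] {v : V → Bool}
    {t : Finset (V × Bool)} :
    satCNF v (t.image fun ℓ => {ℓ}) ↔ satTerm v t := by
  simp only [satCNF, satClause, satTerm, Finset.forall_mem_image, Finset.mem_singleton,
    exists_eq_left]

theorem UPDeriv.satLit {V : Type*} {Th : Finset (Finset (V × Bool))} {ℓ : V × Bool}
    (hℓ : UPDeriv Th ℓ) {v : V → Bool} (hTh : satCNF v Th) : satLit v ℓ := by
  induction hℓ with
  | step δ ℓ hδ _ compl_sat =>
    obtain ⟨k, hkδ, hk⟩ := hTh δ hδ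
    obtain rfl | hne := eq_or_ne k ℓ
    · exact hk
    · exact absurd hk (satLit_litCompl_iff.mp (compl_sat k hkδ hne))

theorem UPImplicant.satCNF {V : Type*} [DecidableEq V] {Th Φ : Finset (Finset (V × Bool))}
    {t : Finset (V × Bool)} (ht : UPImplicant Th Φ t) {v : V → Bool} (hvt : satTerm v t)
    (hvTh : satCNF v Th) : satCNF v Φ := by
  intro δ hδ
  obtain ⟨ℓ, hℓδ, hℓ⟩ := ht δ hδ
  exact ⟨ℓ, hℓδ, hℓ.satLit (satCNF_union_iff.mpr ⟨hvTh, satCNF_image_singleton_iff.mpr hvt⟩)⟩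

theorem card_filter_get_eq_countP {α : Type*} (l : List α) (p : α → Bool) :
    (Finset.univ.filter fun i : Fin l.length => p (l.get i)).card = l.countP p :=
  calc (Finset.univ.filter fun i : Fin l.length => p (l.get i)).card
      = (List.finRange l.length).countP (p ∘ l.get) := by
        rw [← List.toFinset_finRange, (List.nodup_finRange _).card_eq_countP]
        simp only [Bool.decide_eq_true, Function.comp_def]
    _ = ((List.finRange l.length).map l.get).countP p := List.countP_map.symm
    _ = l.countP p := by rw [List.map_get_finRange]

theorem card_le_countP_of_forall_get {α : Type*} {l : List α} {p : α → Bool}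
    {I : Finset (Fin l.length)} (hI : ∀ i ∈ I, p (l.get i)) : I.card ≤ l.countP p := by
  rw [← card_filter_get_eq_countP]
  exact Finset.card_le_card fun i hi => Finset.mem_filter_univ i |>.mpr (hI i hi)

theorem majSat_eq_true_iff {V : Type*} {Φs : List (Finset (Finset (V × Bool)))}
    {v : V → Bool} :
    majSat Φs v = true ↔ Φs.length / 2 + 1 ≤ Φs.countP fun Φ => decide (satCNF v Φ) := by
  rw [majSat, decide_eq_true_iff]
  omega

theorem up_majoritary_reason_is_abductive_general {V : Type*} [DecidableEq V]
    {Φs : List (Finset (Finset (V × Bool)))} {Th : Finset (Finset (V × Bool))}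
    {t : Finset (V × Bool)} {I : Finset (Fin Φs.length)} (hcard : Φs.length / 2 + 1 ≤ I.card)
    (hI : ∀ i ∈ I, UPImplicant Th (Φs.get i) t) {v : V → Bool} (hvt : satTerm v t)
    (hvTh : satCNF v Th) : majSat Φs v = true := by
  have hsat : ∀ i ∈ I, decide (satCNF v (Φs.get i)) = true := fun i hi =>
    decide_eq_true ((hI i hi).satCNF hvt hvTh)
  exact majSat_eq_true_iff.mpr (hcard.trans (card_le_countP_of_forall_get hsat))

/-- A UP-majoritary reason is an abductive explanation: if the assignment `x` is
classified positively by the majority vote of the CNFs `Φ₁, …, Φ_m`, and `t` is a term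
satisfied by `x` that is a UP-implicant given `Th` of at least `⌊m/2⌋ + 1` of the `Φᵢ`,
then every assignment satisfying `t` and `Th` is classified positively by the majority
vote; in particular `t` is an abductive explanation for `x` given the classifier and
`Th`. -/
theorem up_majoritary_reason_is_abductive {V : Type*} [DecidableEq V]
    (Φs : List (Finset (Finset (V × Bool)))) (Th : Finset (Finset (V × Bool)))
    (x : V → Bool) (t : Finset (V × Bool))
    (hx : majSat Φs x = true)
    (hxt : satTerm x t)
    (hUP : ∃ I : Finset (Fin Φs.length), Φs.length / 2 + 1 ≤ I.card ∧
      ∀ i ∈ I, UPImplicant Th (Φs.get i) t) :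
    ∀ v : V → Bool, satTerm v t → satCNF v Th → majSat Φs v = true := by
  obtain ⟨I, hcard, hI⟩ := hUP
  exact fun v hvt hvTh => up_majoritary_reason_is_abductive_general hcard hI hvt hvTh
end

section
/- Correctness of branch-wise rectification of a decision tree by a positive classification rule: let T be a decision tree over X, b a consistent term over X, and Th a Boolean function over X. Let T' be the decision tree obtained from T by replacing, for every 0-path p of T whose associated term p is such that some assignment satisfies p, b and Th simultaneously, the 0-leaf of p by the comb-shaped tree patch(p, b ⇒ y). Then for every assignment v satisfying Th, T'(v) = true if and only if T(v) = true or v satisfies b; that is, modulo Th, T' computes the rectification T ∨ b of T by the rule b ⇒ y. -/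
/-- A term is consistent iff it contains no variable with both polarities. -/
def consistentTerm {V : Type*} (t : Finset (V × Bool)) : Prop :=
  ¬ ∃ x : V, (x, true) ∈ t ∧ (x, false) ∈ t

/-- A (binary) decision tree over variables `V`. -/
inductive DTree (V : Type*) where
  | leaf (b : Bool)
  | node (x : V) (l r : DTree V)

/-- The value of a decision tree on an assignment: at each internal node labelled `x`,
follow the right subtree if `v x = true` and the left subtree otherwise. -/
def DTree.eval {V : Type*} : DTree V → (V → Bool) → Bool
  | .leaf b, _ => b
  | .node x l r, v => if v x then r.eval v else l.eval v

/-- The comb-shaped decision tree testing in sequence the given literals, reaching a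
leaf labelled `true` if all of them are satisfied, and a leaf labelled `false` as soon
as one of them is falsified. -/
def comb {V : Type*} : List (V × Bool) → DTree V
  | [] => .leaf true
  | ℓ :: ls => if ℓ.2 then .node ℓ.1 (.leaf false) (comb ls)
               else .node ℓ.1 (comb ls) (.leaf false)

open Classical in
/-- Branch-wise rectification of a decision tree by the positive classification rule
`b ⇒ y`: every `0`-leaf whose path term `p` is such that some assignment satisfies
`p`, `b` and `Th` simultaneously is replaced by the comb-shaped tree
`patch(p, b ⇒ y)`, which tests the literals of `b` not occurring in `p`. The second
argument accumulates the term of the current path. -/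
noncomputable def rectifyPos {V : Type*} [DecidableEq V]
    (Th : (V → Bool) → Bool) (b : Finset (V × Bool)) :
    DTree V → Finset (V × Bool) → DTree V
  | .leaf true, _ => .leaf true
  | .leaf false, p =>
      if ∃ v : V → Bool, satTerm v p ∧ satTerm v b ∧ Th v = true then comb (b \ p).toList
      else .leaf false
  | .node x l r, p =>
      .node x (rectifyPos Th b l (insert (x, false) p))
              (rectifyPos Th b r (insert (x, true) p))

/-!
Fix `v` satisfying `Th`, and let `p` be the term of the path that `v` follows in `T`. If the leaf of
`p` is a `0`-leaf that is not patched, then `v`, which satisfies both `p` and `Th`, must falsify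
`b`. If it is patched, the comb tests only the literals of `b` outside `p`, which suffices because
`v` satisfies all those in `p`.
-/

section

variable {V : Type*} {v : V → Bool}

theorem satTerm_empty : satTerm v ∅ := by
  simp [satTerm]

theorem eval_comb_cons_eq_true_iff (ℓ : V × Bool) (ls : List (V × Bool)) :
    (comb (ℓ :: ls)).eval v = true ↔ satLit v ℓ ∧ (comb ls).eval v = true := by
  obtain ⟨x, polarity⟩ := ℓ
  cases polarity <;> simp [comb, DTree.eval, satLit]

theorem eval_comb_eq_true_iff (ls : List (V × Bool)) :
    (comb ls).eval v = true ↔ ∀ ℓ ∈ ls, satLit v ℓ := by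
  induction ls with
  | nil => simp [comb, DTree.eval]
  | cons ℓ ls ih => rw [eval_comb_cons_eq_true_iff, ih, List.forall_mem_cons]

variable [DecidableEq V] {Th : (V → Bool) → Bool} {b p : Finset (V × Bool)}

theorem satTerm_insert (ℓ : V × Bool) :
    satTerm v (insert ℓ p) ↔ satLit v ℓ ∧ satTerm v p :=
  Finset.forall_mem_insert ..

theorem satTerm_sdiff_iff (hp : satTerm v p) : satTerm v (b \ p) ↔ satTerm v b := by
  refine ⟨fun hdiff ℓ hℓ => ?_, fun hb ℓ hℓ => hb ℓ (Finset.mem_sdiff.mp hℓ).1⟩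
  by_cases hℓp : ℓ ∈ p
  · exact hp ℓ hℓp
  · exact hdiff ℓ (Finset.mem_sdiff.mpr ⟨hℓ, hℓp⟩)

theorem eval_comb_sdiff_eq_true_iff (hp : satTerm v p) :
    (comb (b \ p).toList).eval v = true ↔ satTerm v b := by
  rw [eval_comb_eq_true_iff, ← satTerm_sdiff_iff hp]
  simp only [Finset.mem_toList, satTerm]

theorem eval_rectifyPos_leaf_false_eq_true_iff (hv : Th v = true) (hp : satTerm v p) :
    (rectifyPos Th b (.leaf false) p).eval v = true ↔ satTerm v b := by
  rw [rectifyPos]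
  split_ifs with hcompat
  · exact eval_comb_sdiff_eq_true_iff hp
  · have hb : ¬ satTerm v b := fun hb => hcompat ⟨v, hp, hb, hv⟩
    simp [DTree.eval, hb]

theorem eval_rectifyPos_eq_true_iff (hv : Th v = true) (T : DTree V) (hp : satTerm v p) :
    (rectifyPos Th b T p).eval v = true ↔ T.eval v = true ∨ satTerm v b := by
  induction T generalizing p with
  | leaf label =>
    cases label with
    | false => simp [eval_rectifyPos_leaf_false_eq_true_iff hv hp, DTree.eval]
    | true => simp [rectifyPos, DTree.eval]
  | node x l r ihl ihr =>
    simp only [rectifyPos, DTree.eval]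
    split_ifs with hx
    · exact ihr ((satTerm_insert _).mpr ⟨hx, hp⟩)
    · exact ihl ((satTerm_insert _).mpr ⟨Bool.eq_false_of_not_eq_true hx, hp⟩)

end

/-- Correctness of branch-wise rectification of a decision tree by a positive
classification rule: modulo `Th`, the rectified tree computes `T ∨ b`, i.e., for every
assignment `v` satisfying `Th`, `T'(v) = true` iff `T(v) = true` or `v` satisfies
`b`. -/
theorem rectifyPos_correct {V : Type*} [DecidableEq V]
    (T : DTree V) (b : Finset (V × Bool)) (hb : consistentTerm b)
    (Th : (V → Bool) → Bool) :
    ∀ v : V → Bool, Th v = true →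
      ((rectifyPos Th b T ∅).eval v = true ↔ (T.eval v = true ∨ satTerm v b)) :=
  fun _ hv => eval_rectifyPos_eq_true_iff hv T satTerm_empty
end
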